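/- arXiv:1211.0025 — 5 statements merged into one kernel-verified Lean document; each statement's English description precedes it below -/
import Mathlib

section
/- Let n ≥ 1, let y_1,…,y_n ∈ {0,1}, and let ∼ be an equivalence relation on {1,…,n}. For each j define p_j to be the arithmetic mean of y_i over the equivalence class of j (i.e., p_j = |{i : i ∼ j and y_i = 1}| / |{i : i ∼ j}|). Then for every real number c, the sum of y_j over {j : p_j = c} equals c times the cardinality of {j : p_j = c}; equivalently, the average of the labels y_j over all indices j whose equivalence class has fraction of 1s equal to c is itself equal to c. -/
/-!
On the level set `S = {j : p j = c}` the claim says `∑ j ∈ S, y j = ∑ j ∈ S, p j`. Since `p` is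
constant on equivalence classes, `S` is a union of classes. Writing `p j` as the sum of
`y i / |[j]|` over `i ∼ j` and exchanging the order of summation, each `i ∈ S` contributes
`y i / |[i]|` once for each of the `|[i]|` indices `j ∼ i`, that is, `y i` in total.
-/

/-- The arithmetic mean of the labels `y i` over the equivalence class of `j`
under the relation `r`. -/
noncomputable def classMean {n : ℕ} (r : Fin n → Fin n → Prop) [DecidableRel r]
    (y : Fin n → ℝ) (j : Fin n) : ℝ :=
  (∑ i ∈ Finset.univ.filter (fun i => r i j), y i) /
    ((Finset.univ.filter (fun i => r i j)).card : ℝ)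

theorem filter_rel_congr {n : ℕ} {r : Fin n → Fin n → Prop} [DecidableRel r]
    (hr : Equivalence r) {i j : Fin n} (h : r i j) :
    Finset.univ.filter (fun k => r k i) = Finset.univ.filter (fun k => r k j) :=
  Finset.filter_congr fun _ _ => ⟨fun hk => hr.trans hk h, fun hk => hr.trans hk (hr.symm h)⟩

theorem classMean_congr {n : ℕ} {r : Fin n → Fin n → Prop} [DecidableRel r]
    (hr : Equivalence r) (y : Fin n → ℝ) {i j : Fin n} (h : r i j) :
    classMean r y i = classMean r y j := by
  unfold classMean
  rw [filter_rel_congr hr h]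

/-- if `y₁,…,yₙ ∈ {0,1}` and `r` is an equivalence relation on
`{1,…,n}`, and `p j` is the mean of the labels over the equivalence class of
`j`, then for every real `c` the sum of `y j` over `{j : p j = c}` equals
`c` times the cardinality of that set. -/
theorem venn_level_set_mean
    (n : ℕ) (hn : 1 ≤ n) (y : Fin n → ℝ) (hy : ∀ i, y i = 0 ∨ y i = 1)
    (r : Fin n → Fin n → Prop) [DecidableRel r] (hr : Equivalence r) (c : ℝ) :
    ∑ j ∈ Finset.univ.filter (fun j => classMean r y j = c), y j
      = c * ((Finset.univ.filter (fun j => classMean r y j = c)).card : ℝ) := by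
  set S := Finset.univ.filter (fun j => classMean r y j = c) with hS
  have hmem : ∀ j, j ∈ S ↔ classMean r y j = c := fun j => by simp [hS]
  let C : Fin n → Finset (Fin n) := fun j => Finset.univ.filter (fun i => r i j)
  have hC : ∀ i j, i ∈ C j ↔ r i j := fun i j => by simp [C]
  have hpos : ∀ i, ((C i).card : ℝ) ≠ 0 := fun i =>
    Nat.cast_ne_zero.mpr (Finset.card_ne_zero_of_mem ((hC i i).mpr (hr.refl i)))
  symm
  calc c * (S.card : ℝ) = ∑ j ∈ S, classMean r y j := by
        rw [Finset.sum_congr rfl fun j hj => (hmem j).mp hj, Finset.sum_const, nsmul_eq_mul,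
          mul_comm]
    _ = ∑ j ∈ S, ∑ i ∈ C j, y i / ((C j).card : ℝ) :=
        Finset.sum_congr rfl fun j _ => Finset.sum_div _ _ _
    _ = ∑ i ∈ S, ∑ j ∈ C i, y i / ((C j).card : ℝ) := by
        refine Finset.sum_comm' fun j i => ?_
        rw [hmem, hmem, hC, hC]
        constructor
        · rintro ⟨hj, hij⟩
          exact ⟨hr.symm hij, (classMean_congr hr y hij).trans hj⟩
        · rintro ⟨hji, hi⟩
          exact ⟨(classMean_congr hr y hji).trans hi, hr.symm hji⟩
    _ = ∑ i ∈ S, y i := by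
        refine Finset.sum_congr rfl fun i _ => ?_
        have hconst : ∀ j ∈ C i, y i / ((C j).card : ℝ) = y i / ((C i).card : ℝ) := by
          intro j hj
          have hCC : C j = C i := filter_rel_congr hr ((hC j i).mp hj)
          rw [hCC]
        rw [Finset.sum_congr rfl hconst, Finset.sum_const, nsmul_eq_mul, mul_div_cancel₀ _ (hpos i)]
end

section
/- Let n ≥ 1, let p_1,…,p_n ∈ [0,1] and y_1,…,y_n ∈ {0,1}. Suppose that for every pair of rational numbers a ≤ b, the sum over all i with a ≤ p_i ≤ b of (y_i − p_i) equals 0. Then for every real number c, the sum of y_i over {i : p_i = c} equals c times the cardinality of {i : p_i = c}; that is, on every level set of (p_i) the average of the labels equals the common value of p_i. -/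
/-!
The values `p i` are finitely many, so a rational interval around `c` that is short enough contains
no value `p i` other than `c` itself. On such an interval the calibration hypothesis is a sum over
exactly the level set `{i : p i = c}`, where `p i` may be replaced by `c`.
-/

/-- if `p₁,…,pₙ ∈ [0,1]`, `y₁,…,yₙ ∈ {0,1}` and for all rationals
`a ≤ b` the sum of `yᵢ - pᵢ` over `{i : a ≤ pᵢ ≤ b}` vanishes, then on every
level set of `p` the average of the labels equals the common value of `p`. -/
theorem calibrated_level_set_mean
    (n : ℕ) (hn : 1 ≤ n) (p : Fin n → ℝ) (hp : ∀ i, p i ∈ Set.Icc (0 : ℝ) 1)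
    (y : Fin n → ℝ) (hy : ∀ i, y i = 0 ∨ y i = 1)
    (hcal : ∀ a b : ℚ, a ≤ b →
      ∑ i ∈ Finset.univ.filter (fun i => (a : ℝ) ≤ p i ∧ p i ≤ (b : ℝ)),
        (y i - p i) = 0)
    (c : ℝ) :
    ∑ i ∈ Finset.univ.filter (fun i => p i = c), y i
      = c * ((Finset.univ.filter (fun i => p i = c)).card : ℝ) := by
  -- The values other than `c` form a finite, hence closed, set; its complement contains a ball at `c`.
  have hopen : IsOpen (Set.range p \ {c})ᶜ :=
    ((Set.finite_range p).subset Set.sdiff_subset).isClosed.isOpen_compl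
  obtain ⟨ε, hε, hball⟩ := Metric.isOpen_iff.mp hopen c (by simp)
  obtain ⟨a, ha, hac⟩ := exists_rat_btwn (show c - ε < c by linarith)
  obtain ⟨b, hcb, hb⟩ := exists_rat_btwn (show c < c + ε by linarith)
  have hlevel : Finset.univ.filter (fun i => (a : ℝ) ≤ p i ∧ p i ≤ (b : ℝ))
      = Finset.univ.filter (fun i => p i = c) := by
    ext i
    simp only [Finset.mem_filter, Finset.mem_univ, true_and]
    constructor
    · rintro ⟨h1, h2⟩
      by_contra hne
      have hmem : p i ∈ Metric.ball c ε := by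
        rw [Metric.mem_ball, Real.dist_eq, abs_lt]
        constructor <;> linarith
      exact hball hmem ⟨⟨i, rfl⟩, hne⟩
    · rintro rfl
      exact ⟨hac.le, hcb.le⟩
  have hsum := hcal a b (by exact_mod_cast (hac.trans hcb).le)
  rw [hlevel, Finset.sum_sub_distrib, sub_eq_zero] at hsum
  rw [hsum, Finset.sum_congr rfl (fun i hi => (Finset.mem_filter.mp hi).2), Finset.sum_const,
    nsmul_eq_mul, mul_comm]
end

section
/- Let n ≥ 1, t_1,…,t_n ∈ ℝ and y_1,…,y_n ∈ {0,1}, and let T = {t_1,…,t_n}. Let g : T → [0,1] be an isotonic calibrator for ((t_1,y_1),…,(t_n,y_n)), i.e. an increasing function maximizing the likelihood ∏_{i=1}^n p_i, where p_i := g(t_i) if y_i = 1 and p_i := 1 − g(t_i) if y_i = 0, over all increasing functions from T to [0,1]. Then every value p ∈ {g(t_1),…,g(t_n)} equals the arithmetic mean of the labels y_i over the indices i with g(t_i) = p; that is, for each such p, the sum of y_i over {i : g(t_i) = p} equals p times the cardinality of {i : g(t_i) = p}. -/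
/-!
Comparison with the constant `1/2` shows that the maximal likelihood is positive, so every factor
of it is positive. Hence a level set at height `0` carries only labels `0`, and one at height `1`
only labels `1`. For a level `0 < c < 1`, moving the whole level set to a height `x` close to `c`
keeps the function increasing on the sample, where `g` takes only finitely many values; so the
log-likelihood, as a
function of `x`, has a local maximum at `c`. Its derivative there is the sum of
`(y i - c) / (c * (1 - c))` over the level set, and it vanishes by Fermat's theorem.
-/

/-- The likelihood of the increasing function `g` for scores `t` and labels
`y ∈ {0,1}`: the product over `i` of `g (t i)` if `y i = 1` and of
`1 - g (t i)` if `y i = 0`. -/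
noncomputable def isoLikelihood {n : ℕ} (t : Fin n → ℝ) (y : Fin n → ℝ)
    (g : ℝ → ℝ) : ℝ :=
  ∏ i, if y i = 1 then g (t i) else 1 - g (t i)

/-- The function `g` with its level set at height `c` moved to height `x`. -/
noncomputable def moveLevel (g : ℝ → ℝ) (c x : ℝ) (s : ℝ) : ℝ :=
  if g s = c then x else g s

/-- The factor of the `i`-th observation in `isoLikelihood`. -/
noncomputable def isoFactor {n : ℕ} (t y : Fin n → ℝ) (g : ℝ → ℝ) (i : Fin n) : ℝ :=
  if y i = 1 then g (t i) else 1 - g (t i)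

lemma isoLikelihood_eq_prod {n : ℕ} (t y : Fin n → ℝ) (g : ℝ → ℝ) :
    isoLikelihood t y g = ∏ i, isoFactor t y g i := rfl

lemma moveLevel_self (g : ℝ → ℝ) (c : ℝ) : moveLevel g c c = g := by
  funext s
  unfold moveLevel
  split_ifs with h
  · exact h.symm
  · rfl

/-- A maximizer has positive factors, since the constant `1/2` has positive likelihood. -/
lemma isoFactor_pos_of_max {n : ℕ} {t y : Fin n → ℝ} {g : ℝ → ℝ}
    (hg_range : ∀ i, g (t i) ∈ Set.Icc (0 : ℝ) 1)
    (hg_max : ∀ g' : ℝ → ℝ, (∀ i, g' (t i) ∈ Set.Icc (0 : ℝ) 1) →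
      (∀ i j, t i ≤ t j → g' (t i) ≤ g' (t j)) →
      isoLikelihood t y g' ≤ isoLikelihood t y g) (i : Fin n) :
    0 < isoFactor t y g i := by
  have h1 : isoLikelihood t y (fun _ => 1 / 2) ≤ isoLikelihood t y g :=
    hg_max _ (fun _ => by constructor <;> norm_num) (fun _ _ _ => le_rfl)
  have h2 : 0 < isoLikelihood t y (fun _ => 1 / 2) := by
    refine Finset.prod_pos fun j _ => ?_
    split_ifs <;> norm_num
  have h3 : isoFactor t y g i ≠ 0 := by
    have := (h2.trans_le h1).ne'
    rw [isoLikelihood_eq_prod, Finset.prod_ne_zero_iff] at this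
    exact this i (Finset.mem_univ i)
  refine lt_of_le_of_ne ?_ h3.symm
  have := hg_range i
  unfold isoFactor
  split_ifs
  · exact this.1
  · linarith [this.2]

/-- The logarithmic derivative of a factor; at a label `y i ∈ {0,1}` both branches of the factor
give the same expression `(y i - c) / (c * (1 - c))`. -/
lemma hasDerivAt_log_isoFactor {n : ℕ} {t y : Fin n → ℝ} (hy : ∀ i, y i = 0 ∨ y i = 1)
    {g : ℝ → ℝ} {c : ℝ} (hc0 : 0 < c) (hc1 : c < 1) (i : Fin n) :
    HasDerivAt (fun x => Real.log (isoFactor t y (moveLevel g c x) i))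
      (if g (t i) = c then (y i - c) / (c * (1 - c)) else 0) c := by
  have h1 : (1 - c) ≠ 0 := by linarith
  have h0 : c ≠ 0 := hc0.ne'
  unfold isoFactor moveLevel
  by_cases hi : g (t i) = c
  · simp only [hi, if_true]
    rcases hy i with h | h
    · simp only [h, zero_ne_one, if_false]
      convert ((hasDerivAt_id' c).const_sub 1).log h1 using 1
      field_simp
      ring
    · simp only [h, if_true]
      convert (hasDerivAt_id' c).log h0 using 1
      field_simp
  · simp only [hi, if_false]
    exact hasDerivAt_const _ _

/-- if `g` is an isotonic calibrator for `((t₁,y₁),…,(tₙ,yₙ))`,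
i.e. an increasing `[0,1]`-valued function on `T = {t₁,…,tₙ}` maximizing the
likelihood among all such functions, then every value `c` of `i ↦ g (t i)`
equals the mean of the labels `y i` over `{i : g (t i) = c}`. -/
theorem isotonic_calibrator_level_set_mean
    (n : ℕ) (hn : 1 ≤ n) (t : Fin n → ℝ) (y : Fin n → ℝ)
    (hy : ∀ i, y i = 0 ∨ y i = 1)
    (g : ℝ → ℝ)
    (hg_range : ∀ i, g (t i) ∈ Set.Icc (0 : ℝ) 1)
    (hg_incr : ∀ i j, t i ≤ t j → g (t i) ≤ g (t j))
    (hg_max : ∀ g' : ℝ → ℝ, (∀ i, g' (t i) ∈ Set.Icc (0 : ℝ) 1) →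
      (∀ i j, t i ≤ t j → g' (t i) ≤ g' (t j)) →
      isoLikelihood t y g' ≤ isoLikelihood t y g)
    (c : ℝ) (hc : ∃ i, g (t i) = c) :
    ∑ i ∈ Finset.univ.filter (fun i => g (t i) = c), y i
      = c * ((Finset.univ.filter (fun i => g (t i) = c)).card : ℝ) := by
  have hpos := isoFactor_pos_of_max hg_range hg_max
  obtain ⟨i₀, hi₀⟩ := hc
  have hc01 : c ∈ Set.Icc (0 : ℝ) 1 := hi₀ ▸ hg_range i₀
  -- It suffices that the deviations from `c` sum to zero over the level set.
  suffices H : ∑ i ∈ Finset.univ.filter (fun i => g (t i) = c), (y i - c) = 0 by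
    rw [Finset.sum_sub_distrib, Finset.sum_const, nsmul_eq_mul] at H
    linarith
  rcases hc01.1.eq_or_lt with h0 | hc0
  · refine Finset.sum_eq_zero fun i hi => ?_
    have hi := (Finset.mem_filter.1 hi).2
    have hp := hpos i
    rcases hy i with h | h
    · linarith
    · simp only [isoFactor, h, if_true] at hp
      linarith
  rcases hc01.2.eq_or_lt with h1 | hc1
  · refine Finset.sum_eq_zero fun i hi => ?_
    have hi := (Finset.mem_filter.1 hi).2
    have hp := hpos i
    rcases hy i with h | h
    · simp only [isoFactor, h, zero_ne_one, if_false] at hp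
      linarith
    · linarith
  have hmax : IsLocalMax (fun x => ∑ i, Real.log (isoFactor t y (moveLevel g c x) i)) c := by
    -- Heights close to `c` stay strictly on the same side of every other value of `g`.
    have hsep : ∀ᶠ x in nhds c, ∀ i,
        (g (t i) < c → g (t i) < x) ∧ (c < g (t i) → x < g (t i)) := by
      refine Filter.eventually_all.2 fun i => ?_
      rcases lt_trichotomy (g (t i)) c with h | h | h
      · filter_upwards [lt_mem_nhds h] with x hx
        exact ⟨fun _ => hx, fun h' => absurd h' h.not_gt⟩
      · exact Filter.Eventually.of_forall fun x =>
          ⟨fun h' => absurd h h'.ne, fun h' => absurd h h'.ne'⟩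
      · filter_upwards [gt_mem_nhds h] with x hx
        exact ⟨fun h' => absurd h' h.not_gt, fun _ => hx⟩
    filter_upwards [hsep, lt_mem_nhds hc0, gt_mem_nhds hc1] with x hx hx0 hx1
    have hle : isoLikelihood t y (moveLevel g c x) ≤ isoLikelihood t y g := by
      refine hg_max _ (fun i => ?_) (fun i j hij => ?_)
      · unfold moveLevel
        split_ifs
        · exact ⟨hx0.le, hx1.le⟩
        · exact hg_range i
      · have hm := hg_incr i j hij
        unfold moveLevel
        split_ifs with hi hj hj
        · exact le_rfl
        · exact ((hx j).2 (lt_of_le_of_ne (hi ▸ hm) (Ne.symm hj))).le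
        · exact ((hx i).1 (lt_of_le_of_ne (hj ▸ hm) hi)).le
        · exact hm
    have hposx : ∀ i, 0 < isoFactor t y (moveLevel g c x) i := by
      intro i
      have hp := hpos i
      unfold isoFactor moveLevel at *
      split_ifs at * <;> linarith
    rw [← Real.log_prod (fun i _ => (hposx i).ne'), moveLevel_self,
      ← Real.log_prod (fun i _ => (hpos i).ne')]
    exact Real.log_le_log (Finset.prod_pos fun i _ => hposx i) hle
  have hder := hmax.hasDerivAt_eq_zero
    (HasDerivAt.fun_sum fun i _ => hasDerivAt_log_isoFactor hy hc0 hc1 i)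
  rw [← Finset.sum_filter, ← Finset.sum_div] at hder
  exact (div_eq_zero_iff.1 hder).resolve_right (mul_pos hc0 (sub_pos.2 hc1)).ne'
end

section
/- Let p_0 ∈ [0,1) and p_1 ∈ (0,1], and set p* := p_1/(1 − p_0 + p_1). Then p* minimizes over p ∈ (0,1) the worst-case log-loss regret: for every p ∈ (0,1), max(−ln(1−p*) + ln(1−p_0), −ln p* + ln p_1) ≤ max(−ln(1−p) + ln(1−p_0), −ln p + ln p_1). -/
/-! At `p* = p₁ / (1 - p₀ + p₁)` both regrets equal `log (1 - p₀ + p₁)`. The first regret is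
increasing in `p` and the second is decreasing, so moving `p` to the right of `p*` cannot lower the
first, and moving it to the left cannot lower the second; either way the maximum is at least this
common value. -/

/-- For `p₀ ∈ [0,1)` and `p₁ ∈ (0,1]`, the point
`p* = p₁ / (1 - p₀ + p₁)` minimizes over `p ∈ (0,1)` the worst-case log-loss
regret `max(-ln(1-p) + ln(1-p₀), -ln p + ln p₁)`. -/
theorem log_loss_minimax
    (p0 p1 : ℝ) (hp0 : p0 ∈ Set.Ico (0 : ℝ) 1) (hp1 : p1 ∈ Set.Ioc (0 : ℝ) 1) :
    ∀ p ∈ Set.Ioo (0 : ℝ) 1,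
      max (-Real.log (1 - p1 / (1 - p0 + p1)) + Real.log (1 - p0))
          (-Real.log (p1 / (1 - p0 + p1)) + Real.log p1)
        ≤ max (-Real.log (1 - p) + Real.log (1 - p0))
              (-Real.log p + Real.log p1) := by
  intro p hp
  have h0 : 0 < 1 - p0 := sub_pos.2 hp0.2
  have h1 : 0 < p1 := hp1.1
  have hD : 0 < 1 - p0 + p1 := add_pos h0 h1
  have hcompl : 1 - p1 / (1 - p0 + p1) = (1 - p0) / (1 - p0 + p1) := by
    rw [eq_div_iff hD.ne', sub_mul, div_mul_cancel₀ _ hD.ne']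
    ring
  have hlog0 := Real.log_div h0.ne' hD.ne'
  have hlog1 := Real.log_div h1.ne' hD.ne'
  rcases le_total (p1 / (1 - p0 + p1)) p with h | h
  · have hmono : Real.log (1 - p) ≤ Real.log ((1 - p0) / (1 - p0 + p1)) :=
      Real.log_le_log (sub_pos.2 hp.2) (by linarith)
    rw [hcompl]
    exact le_max_of_le_left (max_le (by linarith) (by linarith))
  · have hmono : Real.log p ≤ Real.log (p1 / (1 - p0 + p1)) := Real.log_le_log hp.1 h
    rw [hcompl]
    exact le_max_of_le_right (max_le (by linarith) (by linarith))
end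

section
/- Let p_0, p_1 ∈ [0,1] and set p* := p_1 + p_0²/2 − p_1²/2. Then p* ∈ [0,1] and p* minimizes over p ∈ [0,1] the worst-case square-loss regret: for every p ∈ [0,1], max(p*² − p_0², (1−p*)² − (1−p_1)²) ≤ max(p² − p_0², (1−p)² − (1−p_1)²). -/
/-!
The regret under outcome `0` is increasing in `p` on `[0,1]`, the regret under outcome `1` is
decreasing, and the two agree at `p*`. Moving `p` away from `p*` in either direction therefore
increases one of them, so the maximum is smallest at `p*`.
-/

/-- For `p₀, p₁ ∈ [0,1]`, the point `p* = p₁ + p₀²/2 - p₁²/2`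
lies in `[0,1]` and minimizes over `p ∈ [0,1]` the worst-case square-loss
regret `max(p² - p₀², (1-p)² - (1-p₁)²)`. -/
theorem square_loss_minimax
    (p0 p1 : ℝ) (hp0 : p0 ∈ Set.Icc (0 : ℝ) 1) (hp1 : p1 ∈ Set.Icc (0 : ℝ) 1) :
    p1 + p0 ^ 2 / 2 - p1 ^ 2 / 2 ∈ Set.Icc (0 : ℝ) 1 ∧
    ∀ p ∈ Set.Icc (0 : ℝ) 1,
      max ((p1 + p0 ^ 2 / 2 - p1 ^ 2 / 2) ^ 2 - p0 ^ 2)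
          ((1 - (p1 + p0 ^ 2 / 2 - p1 ^ 2 / 2)) ^ 2 - (1 - p1) ^ 2)
        ≤ max (p ^ 2 - p0 ^ 2) ((1 - p) ^ 2 - (1 - p1) ^ 2) := by
  obtain ⟨h0, h0'⟩ := hp0
  obtain ⟨h1, h1'⟩ := hp1
  have hmem : p1 + p0 ^ 2 / 2 - p1 ^ 2 / 2 ∈ Set.Icc (0 : ℝ) 1 := by
    constructor <;> nlinarith [sq_nonneg p0, sq_nonneg (1 - p1)]
  refine ⟨hmem, fun p hp => ?_⟩
  -- `p*` is the point at which the two regrets coincide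
  have heq : (1 - (p1 + p0 ^ 2 / 2 - p1 ^ 2 / 2)) ^ 2 - (1 - p1) ^ 2
      = (p1 + p0 ^ 2 / 2 - p1 ^ 2 / 2) ^ 2 - p0 ^ 2 := by ring
  rcases le_total (p1 + p0 ^ 2 / 2 - p1 ^ 2 / 2) p with h | h
  · rw [heq, max_self]
    exact le_max_of_le_left (sub_le_sub_right (pow_le_pow_left₀ hmem.1 h 2) _)
  · rw [← heq, max_self]
    exact le_max_of_le_right (sub_le_sub_right
      (pow_le_pow_left₀ (sub_nonneg.2 hmem.2) (sub_le_sub_left h 1) 2) _)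
end
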